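/- arXiv:2507.15638 — 7 statements merged into one kernel-verified Lean document; each statement's English description precedes it below -/
import Mathlib

section
/- Let n ≥ p and let X be a full-rank real n×p matrix. Then the set {ξ ∈ ℝ^{n×p} | ξᵀX + Xᵀξ = 0} equals the set {WX | W ∈ ℝ^{n×n} skew-symmetric}. -/
/-!
If `W` is skew-symmetric then `(W X)ᵀ X = -(Xᵀ W X) = -Xᵀ (W X)`, so `W X` is tangent.
Conversely, full column rank gives a left inverse `B` of `X` (`exists_left_inverse_of_rank_eq`).
If `A = ξᵀ X` is skew-symmetric, then `W = ξ B - (ξ B)ᵀ + Bᵀ A B` is skew-symmetric, and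
`B X = 1` gives `W X = ξ - Bᵀ A + Bᵀ A = ξ`.
-/

open Matrix

theorem exists_left_inverse_of_rank_eq {n p : ℕ}
    (X : Matrix (Fin n) (Fin p) ℝ) (hX : X.rank = p) :
    ∃ B : Matrix (Fin p) (Fin n) ℝ, B * X = 1 := by
  rw [← Matrix.vecMul_surjective_iff_exists_left_inverse]
  have h : LinearMap.range Xᵀ.mulVecLin = ⊤ := by
    apply Submodule.eq_top_of_finrank_eq
    have h' : Xᵀ.rank = p := by rw [Matrix.rank_transpose, hX]
    simpa [Matrix.rank] using h'
  intro v
  obtain ⟨w, hw⟩ := LinearMap.range_eq_top.mp h v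
  exact ⟨w, by simpa [Matrix.mulVec_transpose] using hw⟩

/-- For a full-rank `X ∈ ℝ^{n×p}` (`n ≥ p`), the set
`{ξ | ξᵀX + Xᵀξ = 0}` equals `{W X | W ∈ ℝ^{n×n} skew-symmetric}`. -/
theorem tangent_space_eq_skew_mul {n p : ℕ} (hnp : p ≤ n)
    (X : Matrix (Fin n) (Fin p) ℝ) (hX : X.rank = p) :
    {ξ : Matrix (Fin n) (Fin p) ℝ | ξᵀ * X + Xᵀ * ξ = 0} =
      {ξ : Matrix (Fin n) (Fin p) ℝ |
        ∃ W : Matrix (Fin n) (Fin n) ℝ, Wᵀ = -W ∧ ξ = W * X} := by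
  ext ξ
  simp only [Set.mem_ofPred_eq]
  constructor
  · intro h
    obtain ⟨B, hB⟩ := exists_left_inverse_of_rank_eq X hX
    have hA : Xᵀ * ξ = -(ξᵀ * X) := eq_neg_of_add_eq_zero_right h
    refine ⟨ξ * B - (ξ * B)ᵀ + Bᵀ * (ξᵀ * X) * B, ?_, ?_⟩
    · have hS : (Bᵀ * (ξᵀ * X) * B)ᵀ = -(Bᵀ * (ξᵀ * X) * B) := by
        rw [transpose_mul, transpose_mul, transpose_mul, transpose_transpose,
          transpose_transpose, hA, Matrix.neg_mul, Matrix.mul_neg, ← Matrix.mul_assoc]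
      rw [transpose_add, transpose_sub, transpose_transpose, hS]
      abel
    · rw [Matrix.add_mul, Matrix.sub_mul, Matrix.mul_assoc ξ, Matrix.mul_assoc _ B X, hB,
        Matrix.mul_one, Matrix.mul_one, transpose_mul, Matrix.mul_assoc]
      abel
  · rintro ⟨W, hW, rfl⟩
    rw [transpose_mul, hW, Matrix.mul_neg, Matrix.neg_mul, Matrix.mul_assoc]
    exact neg_add_cancel _
end

section
/- Let β > 0 and let X be a full-rank real n×p matrix (n ≥ p). The bilinear form g^β_X(ξ, ζ) = trace(ξᵀ (I_n − (1−β) X(XᵀX)⁻¹Xᵀ) ζ (XᵀX)⁻¹) on ℝ^{n×p} × ℝ^{n×p} is symmetric and positive definite, i.e., g^β_X(ξ, ζ) = g^β_X(ζ, ξ) for all ξ, ζ, and g^β_X(ξ, ξ) > 0 for all ξ ≠ 0. -/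
/-!
Write `G = XᵀX`, which is invertible because `rank G = rank X = p`, and `P = X G⁻¹ Xᵀ`, the
orthogonal projection onto the column space of `X`. The middle matrix is
`M = (1 - P) + β P = (1 - P)ᵀ(1 - P) + β PᵀP`. The weight `G⁻¹` factors as `BᵀB` with `B = X G⁻¹`,
so by cyclicity of the trace, with `η = ξ Bᵀ`,
`g(ξ, ξ) = trace (ηᵀ M η) = ‖(1 - P) η‖² + β ‖P η‖²`.
This is positive unless `η = 0`, and `ξ = η X` because `Bᵀ X = 1`. Symmetry only uses that `M` and
`G⁻¹` are symmetric.
-/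

open Matrix

lemma isUnit_gram_of_rank_eq {n p : ℕ} (X : Matrix (Fin n) (Fin p) ℝ) (hX : X.rank = p) :
    IsUnit (Xᵀ * X) := by
  rw [← mulVec_surjective_iff_isUnit]
  have hr : (Xᵀ * X).rank = p := by rw [rank_transpose_mul_self, hX]
  have ht : LinearMap.range (Xᵀ * X).mulVecLin = ⊤ :=
    Submodule.eq_top_of_finrank_eq (by simpa [Matrix.rank] using hr)
  exact LinearMap.range_eq_top.mp ht

lemma trace_transpose_mul_self_nonneg {n m : ℕ} (A : Matrix (Fin n) (Fin m) ℝ) :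
    0 ≤ trace (Aᵀ * A) := by
  simpa using (posSemidef_conjTranspose_mul_self A).trace_nonneg

lemma trace_transpose_mul_self_eq_zero {n m : ℕ} {A : Matrix (Fin n) (Fin m) ℝ}
    (h : trace (Aᵀ * A) = 0) : A = 0 := by
  rwa [← conjTranspose_eq_transpose_of_trivial, trace_conjTranspose_mul_self_eq_zero_iff] at h

lemma trace_form_symm {n p : ℕ} {M : Matrix (Fin n) (Fin n) ℝ} {W : Matrix (Fin p) (Fin p) ℝ}
    (hM : Mᵀ = M) (hW : Wᵀ = W) (ξ ζ : Matrix (Fin n) (Fin p) ℝ) :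
    trace (ξᵀ * M * ζ * W) = trace (ζᵀ * M * ξ * W) := by
  rw [← trace_transpose]
  simp only [transpose_mul, transpose_transpose, hM, hW]
  rw [trace_mul_comm]
  simp only [Matrix.mul_assoc]

/-- An orthogonal projection `P` splits `1 - (1 - β) P` into a positive combination of the two
complementary projections `1 - P` and `P`, hence it is positive definite. -/
lemma trace_projection_form_pos {n m : ℕ} {β : ℝ} (hβ : 0 < β) {P : Matrix (Fin n) (Fin n) ℝ}
    (hPt : Pᵀ = P) (hPP : P * P = P) {η : Matrix (Fin n) (Fin m) ℝ} (hη : η ≠ 0) :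
    0 < trace (ηᵀ * (1 - (1 - β) • P) * η) := by
  have hM : 1 - (1 - β) • P = (1 - P)ᵀ * (1 - P) + β • (Pᵀ * P) := by
    simp only [transpose_sub, transpose_one, hPt, mul_sub, sub_mul, hPP, mul_one, one_mul,
      sub_smul, one_smul]
    abel
  have hsum : trace (ηᵀ * (1 - (1 - β) • P) * η) =
      trace (((1 - P) * η)ᵀ * ((1 - P) * η)) + β * trace ((P * η)ᵀ * (P * η)) := by
    rw [hM]
    simp only [Matrix.mul_add, Matrix.add_mul, trace_add, Matrix.mul_smul, Matrix.smul_mul,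
      trace_smul, smul_eq_mul, transpose_mul, Matrix.mul_assoc]
  have h1 := trace_transpose_mul_self_nonneg ((1 - P) * η)
  have h2 := trace_transpose_mul_self_nonneg (P * η)
  rw [hsum]
  by_contra! hle
  have hQ0 := trace_transpose_mul_self_eq_zero (A := (1 - P) * η)
    (by linarith [mul_nonneg hβ.le h2])
  have hP0 := trace_transpose_mul_self_eq_zero (A := P * η) (by nlinarith)
  apply hη
  rwa [Matrix.sub_mul, hP0, Matrix.one_mul, sub_zero] at hQ0

/-- For `β > 0` and full-rank `X ∈ ℝ^{n×p}` (`n ≥ p`), the bilinear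
form `g^β_X(ξ, ζ) = trace(ξᵀ (I_n − (1−β) X(XᵀX)⁻¹Xᵀ) ζ (XᵀX)⁻¹)` is symmetric
and positive definite. -/
theorem betaMetric_symm_posDef {n p : ℕ} (hnp : p ≤ n) (β : ℝ) (hβ : 0 < β)
    (X : Matrix (Fin n) (Fin p) ℝ) (hX : X.rank = p) :
    (∀ ξ ζ : Matrix (Fin n) (Fin p) ℝ,
      Matrix.trace (ξᵀ * (1 - (1 - β) • (X * (Xᵀ * X)⁻¹ * Xᵀ)) * ζ * (Xᵀ * X)⁻¹) =
        Matrix.trace (ζᵀ * (1 - (1 - β) • (X * (Xᵀ * X)⁻¹ * Xᵀ)) * ξ * (Xᵀ * X)⁻¹)) ∧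
    (∀ ξ : Matrix (Fin n) (Fin p) ℝ, ξ ≠ 0 →
      0 < Matrix.trace (ξᵀ * (1 - (1 - β) • (X * (Xᵀ * X)⁻¹ * Xᵀ)) * ξ * (Xᵀ * X)⁻¹)) := by
  have hG : IsUnit (Xᵀ * X).det := (isUnit_iff_isUnit_det _).mp (isUnit_gram_of_rank_eq X hX)
  have hW : ((Xᵀ * X)⁻¹)ᵀ = (Xᵀ * X)⁻¹ := by
    rw [transpose_nonsing_inv, transpose_mul, transpose_transpose]
  have hWG : (Xᵀ * X)⁻¹ * (Xᵀ * X) = 1 := nonsing_inv_mul _ hG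
  generalize (Xᵀ * X)⁻¹ = W at hW hWG ⊢
  have hPt : (X * W * Xᵀ)ᵀ = X * W * Xᵀ := by
    simp only [transpose_mul, transpose_transpose, hW, Matrix.mul_assoc]
  have hPP : X * W * Xᵀ * (X * W * Xᵀ) = X * W * Xᵀ := by
    calc X * W * Xᵀ * (X * W * Xᵀ) = X * (W * (Xᵀ * X)) * W * Xᵀ := by
          simp only [Matrix.mul_assoc]
      _ = X * W * Xᵀ := by rw [hWG, Matrix.mul_one]
  refine ⟨trace_form_symm (by simp [transpose_sub, transpose_smul, hPt]) hW, fun ξ hξ => ?_⟩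
  have hB : (X * W)ᵀ * (X * W) = W := by
    calc (X * W)ᵀ * (X * W) = W * (Xᵀ * X) * W := by
          simp only [transpose_mul, hW, Matrix.mul_assoc]
      _ = W := by rw [hWG, Matrix.one_mul]
  have hη : ξ * (X * W)ᵀ ≠ 0 := by
    intro h0
    apply hξ
    calc ξ = ξ * (W * (Xᵀ * X)) := by rw [hWG, Matrix.mul_one]
      _ = ξ * (X * W)ᵀ * X := by simp only [transpose_mul, hW, Matrix.mul_assoc]
      _ = 0 := by rw [h0, Matrix.zero_mul]
  have hpos := trace_projection_form_pos hβ hPt hPP hη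
  generalize 1 - (1 - β) • (X * W * Xᵀ) = M at hpos ⊢
  have hcyc : trace ((ξ * (X * W)ᵀ)ᵀ * M * (ξ * (X * W)ᵀ)) = trace (ξᵀ * M * ξ * W) := by
    calc trace ((ξ * (X * W)ᵀ)ᵀ * M * (ξ * (X * W)ᵀ))
        = trace ((X * W) * (ξᵀ * M * ξ * (X * W)ᵀ)) := by
          rw [transpose_mul, transpose_transpose]
          simp only [Matrix.mul_assoc]
      _ = trace (ξᵀ * M * ξ * ((X * W)ᵀ * (X * W))) := by
          rw [trace_mul_comm, Matrix.mul_assoc _ (X * W)ᵀ]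
      _ = trace (ξᵀ * M * ξ * W) := by rw [hB]
  rwa [hcyc] at hpos
end

section
/- Let β > 0 and let X ∈ ℝ^{n×p} have full rank p (n ≥ p). Then the set {η ∈ ℝ^{n×p} | g^β_X(η, ξ) = 0 for all ξ with ξᵀX + Xᵀξ = 0} equals {X(XᵀX)⁻¹S | S ∈ ℝ^{p×p} symmetric}. -/
/-!
Write `G = XᵀX`, which is invertible because `X` has full column rank, and `S = Xᵀη`. The operator
`M = 1 - (1 - β) X G⁻¹ Xᵀ` of the metric satisfies `Xᵀ M = β Xᵀ` and fixes every `K` with `XᵀK = 0`.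

If `η = X G⁻¹ S` with `S` symmetric, the pairing with a tangent `ξ` is `β tr ((G⁻¹ S G⁻¹) (Xᵀξ))`,
the trace of a symmetric times a skew matrix, hence zero. Conversely, split `η = X G⁻¹ S + K` with
`XᵀK = 0` and test against two tangent vectors: `ξ = K G` gives `tr (KᵀK) = 0`, so `K = 0`, and
`ξ = X (S - Sᵀ) G` gives `β tr (Sᵀ (S - Sᵀ)) = 0`, half of `β` times the squared Frobenius norm of
`S - Sᵀ`, so `S` is symmetric.
-/

open Matrix

theorem isUnit_det_gram {n p : ℕ} (X : Matrix (Fin n) (Fin p) ℝ) (hX : X.rank = p) :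
    IsUnit (Xᵀ * X).det := by
  have hr : (Xᵀ * X).rank = Fintype.card (Fin p) := by
    rw [rank_transpose_mul_self, hX, Fintype.card_fin]
  rw [← isUnit_iff_isUnit_det, ← mulVec_surjective_iff_isUnit]
  have htop : LinearMap.range (Xᵀ * X).mulVecLin = ⊤ := by
    apply Submodule.eq_top_of_finrank_eq
    rw [Module.finrank_fintype_fun_eq_card, ← hr, Matrix.rank]
  exact LinearMap.range_eq_top.mp htop

theorem trace_mul_eq_zero_of_symm_of_skew {p : ℕ} (A B : Matrix (Fin p) (Fin p) ℝ)
    (hA : Aᵀ = A) (hB : Bᵀ = -B) : trace (A * B) = 0 := by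
  have h := trace_transpose (A * B)
  rw [transpose_mul, hA, hB, neg_mul, trace_neg, trace_mul_comm] at h
  linarith

theorem eq_zero_of_trace_transpose_mul_self {n p : ℕ} (K : Matrix (Fin n) (Fin p) ℝ)
    (h : trace (Kᵀ * K) = 0) : K = 0 := by
  rw [← conjTranspose_eq_transpose_of_trivial] at h
  exact trace_conjTranspose_mul_self_eq_zero_iff.mp h

theorem isSymm_of_trace_transpose_mul_sub {p : ℕ} (S : Matrix (Fin p) (Fin p) ℝ)
    (h : trace (Sᵀ * (S - Sᵀ)) = 0) : Sᵀ = S := by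
  have h0 : S - Sᵀ = 0 := by
    apply eq_zero_of_trace_transpose_mul_self
    have h1 := trace_mul_eq_zero_of_symm_of_skew (S + Sᵀ) (S - Sᵀ)
      (by rw [transpose_add, transpose_transpose, add_comm])
      (by rw [transpose_sub, transpose_transpose, neg_sub])
    rw [add_mul, trace_add, h] at h1
    rw [transpose_sub, transpose_transpose, sub_mul, trace_sub, h]
    linarith
  exact (sub_eq_zero.mp h0).symm

/-- For `β > 0` and full-rank `X ∈ ℝ^{n×p}` (`n ≥ p`), the normal
space `{η | g^β_X(η, ξ) = 0 for all tangent ξ}` equals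
`{X(XᵀX)⁻¹S | S symmetric}`. -/
theorem normal_space_eq {n p : ℕ} (hnp : p ≤ n) (β : ℝ) (hβ : 0 < β)
    (X : Matrix (Fin n) (Fin p) ℝ) (hX : X.rank = p) :
    {η : Matrix (Fin n) (Fin p) ℝ |
      ∀ ξ : Matrix (Fin n) (Fin p) ℝ, ξᵀ * X + Xᵀ * ξ = 0 →
        Matrix.trace (ηᵀ * (1 - (1 - β) • (X * (Xᵀ * X)⁻¹ * Xᵀ)) * ξ * (Xᵀ * X)⁻¹) = 0} =
      {η : Matrix (Fin n) (Fin p) ℝ |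
        ∃ S : Matrix (Fin p) (Fin p) ℝ, Sᵀ = S ∧ η = X * (Xᵀ * X)⁻¹ * S} := by
  have hu := isUnit_det_gram X hX
  obtain ⟨G, hG⟩ : ∃ G, G = Xᵀ * X := ⟨_, rfl⟩
  have hGt : Gᵀ = G := by rw [hG, transpose_mul, transpose_transpose]
  rw [← hG] at hu ⊢
  have hGit : G⁻¹ᵀ = G⁻¹ := by rw [transpose_nonsing_inv, hGt]
  have hGG : G * G⁻¹ = 1 := mul_nonsing_inv G hu
  obtain ⟨M, hM⟩ : ∃ M, M = 1 - (1 - β) • (X * G⁻¹ * Xᵀ) := ⟨_, rfl⟩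
  rw [← hM]
  have hXM : Xᵀ * M = β • Xᵀ := by
    have : Xᵀ * (X * G⁻¹ * Xᵀ) = Xᵀ := by
      rw [← Matrix.mul_assoc, ← Matrix.mul_assoc, ← hG, hGG, Matrix.one_mul]
    rw [hM, Matrix.mul_sub, Matrix.mul_one, Matrix.mul_smul, this]
    module
  ext η
  simp only [Set.mem_setOf_eq]
  constructor
  · intro h
    obtain ⟨S, hS⟩ : ∃ S, S = Xᵀ * η := ⟨_, rfl⟩
    obtain ⟨K, hK⟩ : ∃ K, K = η - X * G⁻¹ * S := ⟨_, rfl⟩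
    have hXK : Xᵀ * K = 0 := by
      rw [hK, Matrix.mul_sub, ← hS, ← Matrix.mul_assoc, ← Matrix.mul_assoc, ← hG, hGG,
        Matrix.one_mul, sub_self]
    have hKX : Kᵀ * X = 0 := by
      rw [← transpose_transpose (Kᵀ * X), transpose_mul, transpose_transpose, hXK, transpose_zero]
    have hMK : M * K = K := by
      rw [hM, Matrix.sub_mul, Matrix.one_mul, Matrix.smul_mul, Matrix.mul_assoc, hXK,
        Matrix.mul_zero, smul_zero, sub_zero]
    have hη : η = X * G⁻¹ * S + K := by rw [hK]; abel
    have hK0 : K = 0 := by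
      have h1 := h (K * G) (by
        rw [transpose_mul, Matrix.mul_assoc, hKX, ← Matrix.mul_assoc, hXK]
        simp)
      have e : ηᵀ * M * (K * G) * G⁻¹ = Kᵀ * K := by
        calc ηᵀ * M * (K * G) * G⁻¹ = ηᵀ * (M * K) * (G * G⁻¹) := by
              simp only [Matrix.mul_assoc]
          _ = ηᵀ * K := by rw [hMK, hGG, Matrix.mul_one]
          _ = Kᵀ * K := by
              rw [hη, transpose_add, Matrix.add_mul, transpose_mul, transpose_mul,
                Matrix.mul_assoc, Matrix.mul_assoc, hXK]
              simp
      rw [e] at h1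
      exact eq_zero_of_trace_transpose_mul_self K h1
    rw [hK0, add_zero] at hη
    refine ⟨S, isSymm_of_trace_transpose_mul_sub S ?_, hη⟩
    have h2 := h (X * (S - Sᵀ) * G) (by
      have e1 : (X * (S - Sᵀ) * G)ᵀ * X = -(G * (S - Sᵀ) * G) := by
        rw [transpose_mul, transpose_mul, hGt, transpose_sub, transpose_transpose,
          Matrix.mul_assoc, Matrix.mul_assoc, ← hG, ← neg_sub S, Matrix.neg_mul, Matrix.mul_neg,
          Matrix.mul_assoc]
      have e2 : Xᵀ * (X * (S - Sᵀ) * G) = G * (S - Sᵀ) * G := by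
        rw [← Matrix.mul_assoc, ← Matrix.mul_assoc, ← hG]
      rw [e1, e2, neg_add_cancel])
    have e : ηᵀ * M * (X * (S - Sᵀ) * G) * G⁻¹ = β • (Sᵀ * (S - Sᵀ)) := by
      calc ηᵀ * M * (X * (S - Sᵀ) * G) * G⁻¹
          = Sᵀ * G⁻¹ * (Xᵀ * M) * X * (S - Sᵀ) * (G * G⁻¹) := by
            rw [hη, transpose_mul, transpose_mul, hGit]
            simp only [Matrix.mul_assoc]
        _ = β • (Sᵀ * (G⁻¹ * (Xᵀ * X)) * (S - Sᵀ)) := by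
            rw [hXM, hGG, Matrix.mul_one]
            simp only [Matrix.mul_assoc, Matrix.mul_smul, Matrix.smul_mul]
        _ = β • (Sᵀ * (S - Sᵀ)) := by
            rw [← hG, nonsing_inv_mul G hu, Matrix.mul_one]
    rw [e, trace_smul, smul_eq_mul] at h2
    exact (mul_eq_zero.mp h2).resolve_left hβ.ne'
  · rintro ⟨S, hS, rfl⟩ ξ hξ
    have e : (X * G⁻¹ * S)ᵀ * M * ξ * G⁻¹ = β • (S * G⁻¹ * (Xᵀ * ξ) * G⁻¹) := by
      calc (X * G⁻¹ * S)ᵀ * M * ξ * G⁻¹ = S * G⁻¹ * (Xᵀ * M) * ξ * G⁻¹ := by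
            rw [transpose_mul, transpose_mul, hGit, hS]
            simp only [Matrix.mul_assoc]
        _ = _ := by
            rw [hXM]
            simp only [Matrix.mul_assoc, Matrix.mul_smul, Matrix.smul_mul]
    rw [e, trace_smul, trace_mul_comm, ← Matrix.mul_assoc,
      trace_mul_eq_zero_of_symm_of_skew (G⁻¹ * (S * G⁻¹)) (Xᵀ * ξ), smul_zero]
    · rw [transpose_mul, transpose_mul, hGit, hS, Matrix.mul_assoc]
    · rw [transpose_mul, transpose_transpose]
      exact eq_neg_of_add_eq_zero_left hξ
end

section
/- Let β > 0, let X ∈ ℝ^{n×p} have full rank p, and for Z ∈ ℝ^{n×p} define Proj_{X,β}(Z) = X(XᵀX)⁻¹·skew(XᵀZ) + (I_n − X(XᵀX)⁻¹Xᵀ)Z, where skew(A) = (A − Aᵀ)/2. Then (i) Proj_{X,β}(Z)ᵀX + XᵀProj_{X,β}(Z) = 0, and (ii) g^β_X(ξ, Z − Proj_{X,β}(Z)) = 0 for every ξ ∈ ℝ^{n×p} with ξᵀX + Xᵀξ = 0; that is, Proj_{X,β} is the g^β-orthogonal projection onto the tangent space {ξ | ξᵀX + Xᵀξ = 0}. 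-/
/-! With `K = (XᵀX)⁻¹`, full rank gives `XᵀX * K = 1`, so `Xᵀ * Proj Z = skew(XᵀZ)`, which is
tangency, and `Z - Proj Z = X * K * S` with `S = sym(XᵀZ)`. The metric operator acts on the column
space of `X` as multiplication by `β`, so the inner product in question is
`β * trace((ξᵀX) * (K * S * K))`: the trace of a skew-symmetric matrix times a symmetric one. -/

open Matrix

/-- The candidate projection
`Proj_{X,β}(Z) = X(XᵀX)⁻¹·skew(XᵀZ) + (I_n − X(XᵀX)⁻¹Xᵀ)Z`
with `skew(A) = (A − Aᵀ)/2`. -/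
noncomputable def landingProj {n p : ℕ} (X Z : Matrix (Fin n) (Fin p) ℝ) :
    Matrix (Fin n) (Fin p) ℝ :=
  X * (Xᵀ * X)⁻¹ * (((1 : ℝ) / 2) • (Xᵀ * Z - (Xᵀ * Z)ᵀ)) +
    (1 - X * (Xᵀ * X)⁻¹ * Xᵀ) * Z

lemma isUnit_det_transpose_mul_self {n p : ℕ} {X : Matrix (Fin n) (Fin p) ℝ} (hX : X.rank = p) :
    IsUnit (Xᵀ * X).det := by
  rw [← Matrix.isUnit_iff_isUnit_det, ← Matrix.linearIndependent_cols_iff_isUnit,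
    linearIndependent_iff_card_eq_finrank_span, Set.finrank, ← Matrix.rank_eq_finrank_span_cols,
    Matrix.rank_transpose_mul_self, hX, Fintype.card_fin]

lemma trace_skew_mul_symm {p : ℕ} {A B : Matrix (Fin p) (Fin p) ℝ} (hA : Aᵀ = -A) (hB : Bᵀ = B) :
    trace (A * B) = 0 := by
  have h : trace (A * B) = -trace (A * B) := by
    conv_lhs => rw [← trace_transpose, transpose_mul, hA, hB, trace_mul_comm, neg_mul, trace_neg]
  linarith

lemma transpose_mul_landingProj {n p : ℕ} {X : Matrix (Fin n) (Fin p) ℝ} (hX : X.rank = p)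
    (Z : Matrix (Fin n) (Fin p) ℝ) :
    Xᵀ * landingProj X Z = ((1 : ℝ) / 2) • (Xᵀ * Z - (Xᵀ * Z)ᵀ) := by
  have h : Xᵀ * (X * (Xᵀ * X)⁻¹) = 1 := by
    rw [← Matrix.mul_assoc, mul_nonsing_inv _ (isUnit_det_transpose_mul_self hX)]
  rw [landingProj, Matrix.mul_add, ← Matrix.mul_assoc, h, ← Matrix.mul_assoc Xᵀ, Matrix.mul_sub,
    ← Matrix.mul_assoc Xᵀ, h]
  simp

/-- The residual of the projection is `X(XᵀX)⁻¹ sym(XᵀZ)`; this needs no rank assumption. -/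
lemma sub_landingProj {n p : ℕ} (X Z : Matrix (Fin n) (Fin p) ℝ) :
    Z - landingProj X Z =
      X * (Xᵀ * X)⁻¹ * (((1 : ℝ) / 2) • (Xᵀ * Z + (Xᵀ * Z)ᵀ)) := by
  have h : ((1 : ℝ) / 2) • (Xᵀ * Z + (Xᵀ * Z)ᵀ) =
      Xᵀ * Z - ((1 : ℝ) / 2) • (Xᵀ * Z - (Xᵀ * Z)ᵀ) := by
    module
  rw [h, landingProj, Matrix.mul_sub, Matrix.sub_mul, Matrix.one_mul, Matrix.mul_assoc _ Xᵀ Z]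
  abel

/-- For `β > 0` and full-rank `X`, `Proj_{X,β}` is the
`g^β`-orthogonal projection onto the tangent space `{ξ | ξᵀX + Xᵀξ = 0}`:
(i) `Proj_{X,β}(Z)` is tangent, and (ii) `Z − Proj_{X,β}(Z)` is `g^β`-orthogonal
to every tangent vector. -/
theorem landingProj_is_orthogonal_projection {n p : ℕ} (hnp : p ≤ n)
    (β : ℝ) (hβ : 0 < β) (X : Matrix (Fin n) (Fin p) ℝ) (hX : X.rank = p)
    (Z : Matrix (Fin n) (Fin p) ℝ) :
    (landingProj X Z)ᵀ * X + Xᵀ * landingProj X Z = 0 ∧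
    ∀ ξ : Matrix (Fin n) (Fin p) ℝ, ξᵀ * X + Xᵀ * ξ = 0 →
      Matrix.trace (ξᵀ * (1 - (1 - β) • (X * (Xᵀ * X)⁻¹ * Xᵀ)) *
        (Z - landingProj X Z) * (Xᵀ * X)⁻¹) = 0 := by
  refine ⟨?_, fun ξ hξ => ?_⟩
  · have h := transpose_mul_landingProj hX Z
    have h' : (landingProj X Z)ᵀ * X = (Xᵀ * landingProj X Z)ᵀ := by
      rw [transpose_mul, transpose_transpose]
    rw [h', h, transpose_smul, transpose_sub, transpose_transpose]
    module
  · have hKt : ((Xᵀ * X)⁻¹)ᵀ = (Xᵀ * X)⁻¹ := by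
      rw [transpose_nonsing_inv, transpose_mul, transpose_transpose]
    have hS : (((1 : ℝ) / 2) • (Xᵀ * Z + (Xᵀ * Z)ᵀ))ᵀ =
        ((1 : ℝ) / 2) • (Xᵀ * Z + (Xᵀ * Z)ᵀ) := by
      rw [transpose_smul, transpose_add, transpose_transpose, add_comm]
    rw [sub_landingProj]
    generalize ((1 : ℝ) / 2) • (Xᵀ * Z + (Xᵀ * Z)ᵀ) = S at hS ⊢
    have hmetric : (1 - (1 - β) • (X * (Xᵀ * X)⁻¹ * Xᵀ)) * X = β • X := by
      have hP : X * (Xᵀ * X)⁻¹ * Xᵀ * X = X := by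
        rw [Matrix.mul_assoc, Matrix.mul_assoc,
          nonsing_inv_mul _ (isUnit_det_transpose_mul_self hX), Matrix.mul_one]
      rw [Matrix.sub_mul, Matrix.smul_mul, hP, Matrix.one_mul]
      module
    have hskew : (ξᵀ * X)ᵀ = -(ξᵀ * X) := by
      rw [transpose_mul, transpose_transpose]
      exact eq_neg_of_add_eq_zero_right hξ
    have hsymm : ((Xᵀ * X)⁻¹ * S * (Xᵀ * X)⁻¹)ᵀ = (Xᵀ * X)⁻¹ * S * (Xᵀ * X)⁻¹ := by
      rw [transpose_mul, transpose_mul, hKt, hS, Matrix.mul_assoc]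
    have hfactor : ξᵀ * (1 - (1 - β) • (X * (Xᵀ * X)⁻¹ * Xᵀ)) * (X * (Xᵀ * X)⁻¹ * S) *
        (Xᵀ * X)⁻¹ = β • (ξᵀ * X * ((Xᵀ * X)⁻¹ * S * (Xᵀ * X)⁻¹)) := by
      calc _ = ξᵀ * ((1 - (1 - β) • (X * (Xᵀ * X)⁻¹ * Xᵀ)) * X) *
            ((Xᵀ * X)⁻¹ * S * (Xᵀ * X)⁻¹) := by
            generalize (Xᵀ * X)⁻¹ = K
            simp only [Matrix.mul_assoc]
        _ = _ := by rw [hmetric, Matrix.mul_smul, Matrix.smul_mul]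
    rw [hfactor, trace_smul, trace_skew_mul_symm hskew hsymm, smul_zero]
end

section
/- Let β > 0 and let X ∈ ℝ^{n×p} have full rank p. For any G ∈ ℝ^{n×p}, define ∇_β = (I_n + ((1−β)/β) X(XᵀX)⁻¹Xᵀ) G XᵀX. Then g^β_X(∇_β, Z) = trace(Gᵀ Z) for every Z ∈ ℝ^{n×p}. In other words, if G is the Euclidean gradient of a function at X, then ∇_β is its gradient with respect to the β-metric. -/
/-!
Let `A = XᵀX`, which is invertible because `X` has full column rank, and let `P = X A⁻¹ Xᵀ` be the
orthogonal projection onto the column space of `X`. Since `P` is symmetric and idempotent,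
`1 + ((1 - β) / β) P` and `1 - (1 - β) P` are symmetric and mutually inverse: both act as the
identity on the kernel of `P`, and as `1 / β` and `β` on its range. The left-hand side is therefore
`trace (A Gᵀ Z A⁻¹)`, and cyclicity of the trace cancels `A`.
-/

open Matrix

/-- For `β > 0`, full-rank `X ∈ ℝ^{n×p}` and any `G ∈ ℝ^{n×p}`, the
vector `∇_β = (I_n + ((1−β)/β) X(XᵀX)⁻¹Xᵀ) G XᵀX` satisfies
`g^β_X(∇_β, Z) = trace(Gᵀ Z)` for every `Z`; i.e., `∇_β` is the β-metric gradient
corresponding to the Euclidean gradient `G`. -/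
theorem betaGradient_spec {n p : ℕ} (hnp : p ≤ n) (β : ℝ) (hβ : 0 < β)
    (X : Matrix (Fin n) (Fin p) ℝ) (hX : X.rank = p)
    (G : Matrix (Fin n) (Fin p) ℝ) :
    ∀ Z : Matrix (Fin n) (Fin p) ℝ,
      Matrix.trace
        (((1 + ((1 - β) / β) • (X * (Xᵀ * X)⁻¹ * Xᵀ)) * G * (Xᵀ * X))ᵀ *
          (1 - (1 - β) • (X * (Xᵀ * X)⁻¹ * Xᵀ)) * Z * (Xᵀ * X)⁻¹) =
      Matrix.trace (Gᵀ * Z) := by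
  intro Z
  have hA : IsUnit (Xᵀ * X).det := by
    rw [← Matrix.isUnit_iff_isUnit_det, ← Matrix.linearIndependent_rows_iff_isUnit,
      linearIndependent_iff_card_eq_finrank_span, Set.finrank, ← Matrix.rank_eq_finrank_span_row,
      Matrix.rank_transpose_mul_self, hX, Fintype.card_fin]
  have hAT : (Xᵀ * X)ᵀ = Xᵀ * X := by
    rw [Matrix.transpose_mul, Matrix.transpose_transpose]
  have hPT : (X * (Xᵀ * X)⁻¹ * Xᵀ)ᵀ = X * (Xᵀ * X)⁻¹ * Xᵀ := by
    rw [Matrix.transpose_mul, Matrix.transpose_mul, Matrix.transpose_nonsing_inv, hAT,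
      Matrix.transpose_transpose, Matrix.mul_assoc]
  have hPP : X * (Xᵀ * X)⁻¹ * Xᵀ * (X * (Xᵀ * X)⁻¹ * Xᵀ) = X * (Xᵀ * X)⁻¹ * Xᵀ := by
    calc X * (Xᵀ * X)⁻¹ * Xᵀ * (X * (Xᵀ * X)⁻¹ * Xᵀ)
        = X * ((Xᵀ * X)⁻¹ * (Xᵀ * X)) * (Xᵀ * X)⁻¹ * Xᵀ := by simp only [Matrix.mul_assoc]
      _ = X * (Xᵀ * X)⁻¹ * Xᵀ := by rw [Matrix.nonsing_inv_mul _ hA, Matrix.mul_one]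
  generalize X * (Xᵀ * X)⁻¹ * Xᵀ = P at hPT hPP ⊢
  have hinv : (1 + ((1 - β) / β) • P) * (1 - (1 - β) • P) = 1 := by
    simp only [add_mul, mul_sub, one_mul, mul_one, smul_mul_assoc, mul_smul_comm, hPP]
    match_scalars
    · ring
    · field_simp
      ring
  rw [Matrix.transpose_mul _ (Xᵀ * X), hAT, Matrix.transpose_mul _ G, Matrix.transpose_add,
    Matrix.transpose_smul, hPT, Matrix.transpose_one, ← Matrix.mul_assoc, Matrix.mul_assoc (Xᵀ * X * Gᵀ), hinv,
    Matrix.mul_one, Matrix.trace_mul_comm, Matrix.mul_assoc (Xᵀ * X) Gᵀ Z,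
    ← Matrix.mul_assoc, Matrix.nonsing_inv_mul _ hA, Matrix.one_mul]
end

section
/- Let β > 0, let X ∈ ℝ^{n×p} have full rank p, and let G ∈ ℝ^{n×p}. Define ∇_β = (I_n + ((1−β)/β) X(XᵀX)⁻¹Xᵀ) G XᵀX and Proj_{X,β}(Z) = X(XᵀX)⁻¹·skew(XᵀZ) + (I_n − X(XᵀX)⁻¹Xᵀ)Z with skew(A) = (A − Aᵀ)/2. Then Proj_{X,β}(∇_β) = G XᵀX − (1/(2β)) X Gᵀ X + (1/(2β) − 1) X(XᵀX)⁻¹Xᵀ G XᵀX. -/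
open Matrix

/-! Write `S = XᵀX`, which is invertible by full rank, and `P = X S⁻¹ Xᵀ`. From `Xᵀ P = Xᵀ` one gets
`Xᵀ ∇_β = (1 + (1 - β)/β) Xᵀ G S = β⁻¹ Xᵀ G S`, so the skew term contributes
`(1/(2β)) (P G S - X Gᵀ X)`. Since `P` is idempotent, `(I - P) ∇_β = (I - P) G S`.
Adding the two gives the formula. -/

/-- For `β > 0`, full-rank `X ∈ ℝ^{n×p}` and `G ∈ ℝ^{n×p}`, with
`∇_β = (I_n + ((1−β)/β) X(XᵀX)⁻¹Xᵀ) G XᵀX` and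
`Proj_{X,β}(Z) = X(XᵀX)⁻¹·skew(XᵀZ) + (I_n − X(XᵀX)⁻¹Xᵀ)Z`, one has
`Proj_{X,β}(∇_β) = G XᵀX − (1/(2β)) X Gᵀ X + (1/(2β) − 1) X(XᵀX)⁻¹Xᵀ G XᵀX`. -/
theorem constrained_gradient_formula {n p : ℕ} (hnp : p ≤ n) (β : ℝ) (hβ : 0 < β)
    (X : Matrix (Fin n) (Fin p) ℝ) (hX : X.rank = p)
    (G : Matrix (Fin n) (Fin p) ℝ) :
    (let nablaβ := (1 + ((1 - β) / β) • (X * (Xᵀ * X)⁻¹ * Xᵀ)) * G * (Xᵀ * X);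
     X * (Xᵀ * X)⁻¹ * (((1 : ℝ) / 2) • (Xᵀ * nablaβ - (Xᵀ * nablaβ)ᵀ)) +
       (1 - X * (Xᵀ * X)⁻¹ * Xᵀ) * nablaβ) =
      G * (Xᵀ * X) - (1 / (2 * β)) • (X * Gᵀ * X) +
        (1 / (2 * β) - 1) • (X * (Xᵀ * X)⁻¹ * Xᵀ * G * (Xᵀ * X)) := by
  have hS : IsUnit (Xᵀ * X).det := by
    rw [← Matrix.isUnit_iff_isUnit_det]
    rw [← Matrix.linearIndependent_cols_iff_isUnit, linearIndependent_iff_card_eq_finrank_span,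
      Set.finrank, ← Matrix.rank_eq_finrank_span_cols, Matrix.rank_transpose_mul_self, hX, Fintype.card_fin]
  extract_lets nablaβ
  have hST : (Xᵀ * X)ᵀ = Xᵀ * X := by
    rw [transpose_mul, transpose_transpose]
  have hXP : Xᵀ * (X * (Xᵀ * X)⁻¹ * Xᵀ) = Xᵀ := by
    rw [← Matrix.mul_assoc, ← Matrix.mul_assoc, Matrix.mul_nonsing_inv _ hS, Matrix.one_mul]
  have hPP : (X * (Xᵀ * X)⁻¹ * Xᵀ) * (X * (Xᵀ * X)⁻¹ * Xᵀ) = X * (Xᵀ * X)⁻¹ * Xᵀ := by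
    rw [Matrix.mul_assoc (X * (Xᵀ * X)⁻¹), hXP]
  have hc : 1 + (1 - β) / β = 1 / β := by
    field_simp
    ring
  have hN : Xᵀ * nablaβ = (1 / β) • (Xᵀ * G * (Xᵀ * X)) := by
    simp only [nablaβ]
    rw [← Matrix.mul_assoc Xᵀ _ (Xᵀ * X), ← Matrix.mul_assoc Xᵀ _ G, Matrix.mul_add, Matrix.mul_one, Matrix.mul_smul,
      hXP, ← hc, add_smul, one_smul, Matrix.add_mul, Matrix.add_mul, Matrix.smul_mul,
      Matrix.smul_mul]
  have hQ : (1 - X * (Xᵀ * X)⁻¹ * Xᵀ) * nablaβ =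
      G * (Xᵀ * X) - X * (Xᵀ * X)⁻¹ * Xᵀ * G * (Xᵀ * X) := by
    have h1 : (1 - X * (Xᵀ * X)⁻¹ * Xᵀ) *
        (1 + ((1 - β) / β) • (X * (Xᵀ * X)⁻¹ * Xᵀ)) = 1 - X * (Xᵀ * X)⁻¹ * Xᵀ := by
      rw [Matrix.mul_add, Matrix.mul_one, Matrix.mul_smul, Matrix.sub_mul, hPP, Matrix.one_mul,
        sub_self, smul_zero, add_zero]
    simp only [nablaβ]
    rw [← Matrix.mul_assoc _ _ (Xᵀ * X), ← Matrix.mul_assoc _ _ G, h1, Matrix.sub_mul, Matrix.sub_mul,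
      Matrix.one_mul]
  have hT : (Xᵀ * nablaβ)ᵀ = (1 / β) • (Xᵀ * X * (Gᵀ * X)) := by
    rw [hN, transpose_smul, transpose_mul, hST, transpose_mul, transpose_transpose]
  have hA : X * (Xᵀ * X)⁻¹ * (Xᵀ * X * (Gᵀ * X)) = X * Gᵀ * X := by
    rw [Matrix.mul_assoc X, Matrix.nonsing_inv_mul_cancel_left _ _ hS, ← Matrix.mul_assoc]
  have hB : X * (Xᵀ * X)⁻¹ * (Xᵀ * G * (Xᵀ * X)) =
      X * (Xᵀ * X)⁻¹ * Xᵀ * G * (Xᵀ * X) := by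
    simp only [Matrix.mul_assoc]
  rw [hQ, hT, hN, Matrix.mul_smul, Matrix.mul_sub, Matrix.mul_smul, Matrix.mul_smul, hA, hB]
  have hd : 1 / (2 * β) = (1 / 2) * (1 / β) := by
    field_simp
  rw [hd]
  module
end

section
/- Let β > 0, let X ∈ ℝ^{n×p} have full rank p, let G ∈ ℝ^{n×p}, and let V = G XᵀX − (1/(2β)) X Gᵀ X + (1/(2β) − 1) X(XᵀX)⁻¹Xᵀ G XᵀX be the constrained Riemannian gradient in the β-metric. Then VᵀX + XᵀV = 0, i.e., the constrained Riemannian gradient lies in the tangent space to the layer manifold St_{XᵀX} at X (equivalently, Dh(X)[V] = 0 for h(X) = XᵀX − I_p). -/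
open Matrix

lemma transpose_mul_constrained_gradient {n p : ℕ} (c : ℝ) (X G : Matrix (Fin n) (Fin p) ℝ)
    (hS : IsUnit (Xᵀ * X)) :
    Xᵀ * (G * (Xᵀ * X) - c • (X * Gᵀ * X) +
      (c - 1) • (X * (Xᵀ * X)⁻¹ * Xᵀ * G * (Xᵀ * X))) =
    c • (Xᵀ * G * (Xᵀ * X) - Xᵀ * X * (Gᵀ * X)) := by
  have hcancel : Xᵀ * (X * (Xᵀ * X)⁻¹ * Xᵀ * G * (Xᵀ * X)) = Xᵀ * G * (Xᵀ * X) := by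
    have h1 : Xᵀ * X * (Xᵀ * X)⁻¹ = 1 :=
      Matrix.mul_nonsing_inv _ ((Matrix.isUnit_iff_isUnit_det _).mp hS)
    calc Xᵀ * (X * (Xᵀ * X)⁻¹ * Xᵀ * G * (Xᵀ * X))
        = (Xᵀ * X * (Xᵀ * X)⁻¹) * (Xᵀ * G * (Xᵀ * X)) := by simp only [Matrix.mul_assoc]
      _ = Xᵀ * G * (Xᵀ * X) := by rw [h1, Matrix.one_mul]
  rw [Matrix.mul_add, Matrix.mul_sub, Matrix.mul_smul, Matrix.mul_smul, hcancel]
  simp only [Matrix.mul_assoc]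
  module

/-- For `β > 0`, full-rank `X ∈ ℝ^{n×p}` and `G ∈ ℝ^{n×p}`, the
constrained Riemannian gradient
`V = G XᵀX − (1/(2β)) X Gᵀ X + (1/(2β) − 1) X(XᵀX)⁻¹Xᵀ G XᵀX`
satisfies `VᵀX + XᵀV = 0`, i.e. it lies in the tangent space to the layer
manifold `St_{XᵀX}` at `X`. -/
theorem constrained_gradient_is_tangent {n p : ℕ} (β : ℝ) (hβ : 0 < β)
    (X : Matrix (Fin n) (Fin p) ℝ) (hX : X.rank = p)
    (G : Matrix (Fin n) (Fin p) ℝ)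
    (V : Matrix (Fin n) (Fin p) ℝ)
    (hV : V = G * (Xᵀ * X) - (1 / (2 * β)) • (X * Gᵀ * X) +
      (1 / (2 * β) - 1) • (X * (Xᵀ * X)⁻¹ * Xᵀ * G * (Xᵀ * X))) :
    Vᵀ * X + Xᵀ * V = 0 := by
  have hXV : Xᵀ * V = (1 / (2 * β)) • (Xᵀ * G * (Xᵀ * X) - Xᵀ * X * (Gᵀ * X)) := by
    rw [hV]
    exact transpose_mul_constrained_gradient _ X G (isUnit_gram_of_rank_eq X hX)
  have hVX : Vᵀ * X = (Xᵀ * V)ᵀ := by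
    rw [Matrix.transpose_mul, Matrix.transpose_transpose]
  rw [hVX, hXV]
  simp only [Matrix.transpose_smul, Matrix.transpose_sub, Matrix.transpose_mul,
    Matrix.transpose_transpose, Matrix.mul_assoc]
  module
end
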